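/- For all real numbers a, b, the identity (2/π) · ∫₀^∞ ∫₀^∞ (cos(xy) / (cosh(√(π/2) x) · cosh(√(π/2) y))) · cos(ax) cos(by) dx dy = sin(ab) / (sinh(√(π/2) a) · sinh(√(π/2) b)) holds, the right-hand side being interpreted by its continuous extension when a = 0 or b = 0. -/

import Mathlib

/-! Write `c = √(π/2)`. The normalisation is chosen so that `1 / cosh (c x)` is, up to a constant,
its own cosine transform (`integral_cos_div_cosh`). Expanding `cos (x y) cos (b y)` and carrying out
the inner integral with this fact, then using parity in `x`, the left-hand side becomes `c / π`
times the one-dimensional integral `sechCorr c a b` of `cos (a x) / (cosh (c x) cosh (c (x + b)))`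
over the line (`double_integral`).

Since `sinh (c b) / (cosh (c x) cosh (c (x + b))) = tanh (c (x + b)) - tanh (c x)`, an integration by
parts and a translation express `sinh (c b) * sechCorr c a b` through the cosine transform of
`1 / cosh (c x) ^ 2` (`sinh_mul_sechCorr`). Both cosine transforms are instances of the Beta
integral: the substitution `t = sigmoid x` gives `Γ(n/2 + i t) Γ(n/2 - i t) / Γ(n)` for the `n`-th
power of the hyperbolic secant, and the reflection formula evaluates this for `n = 1, 2`.

This settles the case `a ≠ 0`, `b ≠ 0`. The integral `sechCorr c a b` is continuous in `(a, b)` by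
dominated convergence, so it agrees with the continuous extension `g` everywhere, by density. -/

open Real MeasureTheory

/-! ### Integrability -/

lemma inv_cosh_le (x : ℝ) : 1 / Real.cosh x ≤ 2 * (1 + x ^ 2)⁻¹ := by
  have h1 : (x / 2) ^ 2 ≤ Real.sinh (x / 2) ^ 2 := by
    rw [sq_le_sq]
    rcases le_total 0 (x / 2) with h | h
    · rw [abs_of_nonneg h, abs_of_nonneg (Real.sinh_nonneg_iff.2 h)]
      exact Real.self_le_sinh_iff.2 h
    · rw [abs_of_nonpos h, abs_of_nonpos (Real.sinh_nonpos_iff.2 h)]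
      exact neg_le_neg (Real.sinh_le_self_iff.2 h)
  have h2 : Real.cosh x = 1 + 2 * Real.sinh (x / 2) ^ 2 := by
    have := Real.cosh_two_mul (x / 2)
    rw [Real.cosh_sq, mul_div_cancel₀ x (two_ne_zero)] at this
    linarith
  have h3 : 0 < Real.cosh x := Real.cosh_pos x
  rw [← div_eq_mul_inv, div_le_div_iff₀ h3 (by positivity)]
  nlinarith

lemma integrable_sech {c : ℝ} (hc : 0 < c) : Integrable (fun x : ℝ => 1 / Real.cosh (c * x)) := by
  have h : Integrable (fun x : ℝ => 1 / Real.cosh x) := by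
    refine (integrable_inv_one_add_sq.const_mul 2).mono' ?_ (Filter.Eventually.of_forall fun x => ?_)
    · exact (by fun_prop : Measurable fun x : ℝ => 1 / Real.cosh x).aestronglyMeasurable
    · rw [Real.norm_of_nonneg (by have := Real.cosh_pos x; positivity)]
      exact inv_cosh_le x
  exact h.comp_mul_left' hc.ne'

lemma inv_cosh_le_one (x : ℝ) : 1 / Real.cosh x ≤ 1 := by
  rw [div_le_one (Real.cosh_pos x)]; exact Real.one_le_cosh x

/-- Every integrand on the line met below is `1 / cosh (c x)` times a bounded factor. -/
lemma integrable_sech_mul {c : ℝ} (hc : 0 < c) {f : ℝ → ℝ} (hf : Measurable f) {C : ℝ}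
    (hC : ∀ x, |f x| ≤ C) : Integrable (fun x : ℝ => 1 / Real.cosh (c * x) * f x) :=
  (integrable_sech hc).mul_bdd (c := C) hf.aestronglyMeasurable (Filter.Eventually.of_forall hC)

/-! ### Fourier transforms of the powers of the hyperbolic secant -/

lemma log_sigmoid (x : ℝ) :
    Real.log (Real.sigmoid x) = x / 2 - Real.log (2 * Real.cosh (x / 2)) := by
  have h : Real.sigmoid x = Real.exp (x / 2) / (2 * Real.cosh (x / 2)) := by
    rw [Real.sigmoid_def, Real.cosh_eq, inv_eq_one_div, div_eq_div_iff (by positivity) (by positivity)]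
    have : Real.exp (-x) = Real.exp (-(x / 2)) * Real.exp (-(x / 2)) := by
      rw [← Real.exp_add]; ring_nf
    have h2 : Real.exp (x / 2) * Real.exp (-(x / 2)) = 1 := by
      rw [← Real.exp_add]; simp
    rw [this]
    linear_combination (-Real.exp (-(x / 2))) * h2
  have := Real.cosh_pos (x / 2)
  rw [h, Real.log_div (Real.exp_pos _).ne' (by positivity), Real.log_exp]

/-- The substitution `t = sigmoid x` turns the Beta integral into a Fourier integral. -/
lemma integral_sigmoid (u v : ℂ) :
    ∫ x : ℝ, (Real.sigmoid x : ℂ) ^ u * (Real.sigmoid (-x) : ℂ) ^ v = Complex.betaIntegral u v := by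
  have key := integral_image_eq_integral_abs_deriv_smul (s := Set.univ) (f := Real.sigmoid)
    (f' := fun x => Real.sigmoid x * (1 - Real.sigmoid x)) MeasurableSet.univ
    (fun x _ => (Real.hasDerivAt_sigmoid x).hasDerivWithinAt)
    (Real.sigmoid_injective.injOn)
    (fun x : ℝ => (x : ℂ) ^ (u - 1) * (1 - (x : ℂ)) ^ (v - 1))
  rw [Set.image_univ, Real.range_sigmoid] at key
  rw [Complex.betaIntegral, intervalIntegral.integral_of_le zero_le_one, integral_Ioc_eq_integral_Ioo,
    key, Measure.restrict_univ]
  refine integral_congr_ae (Filter.Eventually.of_forall fun x => ?_)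
  have h1 := Real.sigmoid_pos x
  have h2 := Real.sigmoid_pos (-x)
  have e : (1 : ℂ) - (Real.sigmoid x : ℂ) = (Real.sigmoid (-x) : ℂ) := by
    rw [Real.sigmoid_neg]; push_cast; ring
  have n1 : (Real.sigmoid x : ℂ) ≠ 0 := by exact_mod_cast h1.ne'
  have n2 : (Real.sigmoid (-x) : ℂ) ≠ 0 := by exact_mod_cast h2.ne'
  simp only [e, ← Real.sigmoid_neg]
  rw [abs_of_pos (mul_pos h1 h2), Complex.cpow_sub _ _ n1, Complex.cpow_sub _ _ n2,
    Complex.cpow_one, Complex.cpow_one, Complex.real_smul]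
  push_cast
  field_simp

lemma integral_cexp_div_cosh_pow (n : ℕ) (hn : 0 < n) (t : ℝ) :
    ∫ x : ℝ, Complex.exp (Complex.I * t * x) / ((2 * Real.cosh (x / 2) : ℝ) : ℂ) ^ n =
      Complex.Gamma (n / 2 + Complex.I * t) * Complex.Gamma (n / 2 - Complex.I * t) /
        Complex.Gamma n := by
  have hn' : (0 : ℝ) < n := by exact_mod_cast hn
  have hre1 : 0 < ((n : ℂ) / 2 + Complex.I * t).re := by simpa using hn
  have hre2 : 0 < ((n : ℂ) / 2 - Complex.I * t).re := by simpa using hn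
  rw [Complex.Gamma_mul_Gamma_eq_betaIntegral hre1 hre2]
  have : (n : ℂ) / 2 + Complex.I * t + (n / 2 - Complex.I * t) = n := by ring
  rw [this, mul_div_cancel_left₀ _ (Complex.Gamma_ne_zero_of_re_pos (by simpa using hn)),
    ← integral_sigmoid]
  refine integral_congr_ae (Filter.Eventually.of_forall fun x => ?_)
  have h1 := Real.sigmoid_pos x
  have h2 := Real.sigmoid_pos (-x)
  have n1 : (Real.sigmoid x : ℂ) ≠ 0 := by exact_mod_cast h1.ne'
  have n2 : (Real.sigmoid (-x) : ℂ) ≠ 0 := by exact_mod_cast h2.ne'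
  have hp : 0 < 2 * Real.cosh (x / 2) := by have := Real.cosh_pos (x / 2); positivity
  have e3 : ((2 * Real.cosh (x / 2) : ℝ) : ℂ) ^ n
      = Complex.exp (n * (Real.log (2 * Real.cosh (x / 2)) : ℝ)) := by
    rw [Complex.exp_nat_mul, ← Complex.ofReal_exp, Real.exp_log hp]
  simp only
  rw [e3, Complex.cpow_def_of_ne_zero n1, Complex.cpow_def_of_ne_zero n2,
    ← Complex.ofReal_log h1.le, ← Complex.ofReal_log h2.le, log_sigmoid, log_sigmoid,
    neg_div, Real.cosh_neg, ← Complex.exp_sub, ← Complex.exp_add]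
  congr 1
  push_cast
  ring

lemma integral_cos_div_cosh_pow {c : ℝ} (hc : 0 < c) (n : ℕ) (hn : 0 < n) (a : ℝ) :
    ∫ x : ℝ, Real.cos (a * x) / (2 * Real.cosh (c * x)) ^ n = (2 * c)⁻¹ *
      (Complex.Gamma (n / 2 + Complex.I * (a / (2 * c) : ℝ)) *
        Complex.Gamma (n / 2 - Complex.I * (a / (2 * c) : ℝ)) / Complex.Gamma n).re := by
  set t := a / (2 * c) with ht
  have hscale := Measure.integral_comp_mul_left
    (fun x : ℝ => Real.cos (t * x) / (2 * Real.cosh (x / 2)) ^ n) (2 * c)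
  rw [abs_of_pos (by positivity), smul_eq_mul] at hscale
  have e : ∀ x : ℝ, Real.cos (a * x) / (2 * Real.cosh (c * x)) ^ n =
      Real.cos (t * (2 * c * x)) / (2 * Real.cosh (2 * c * x / 2)) ^ n := by
    intro x
    have h1 : t * (2 * c * x) = a * x := by rw [ht]; field_simp
    have h2 : 2 * c * x / 2 = c * x := by ring
    rw [h1, h2]
  simp_rw [e]
  rw [hscale, ← integral_cexp_div_cosh_pow n hn t]
  congr 1
  have hint : Integrable (fun x : ℝ =>
      Complex.exp (Complex.I * t * x) / ((2 * Real.cosh (x / 2) : ℝ) : ℂ) ^ n) := by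
    refine (integrable_sech (c := 1 / 2) (by norm_num)).mono' ?_
      (Filter.Eventually.of_forall fun x => ?_)
    · exact (by fun_prop : Measurable fun x : ℝ =>
        Complex.exp (Complex.I * t * x) / ((2 * Real.cosh (x / 2) : ℝ) : ℂ) ^ n).aestronglyMeasurable
    · have h1 := Real.one_le_cosh (x / 2)
      have h0 : Complex.I * t * x = ((t * x : ℝ) : ℂ) * Complex.I := by push_cast; ring
      rw [norm_div, h0, Complex.norm_exp_ofReal_mul_I, norm_pow, Complex.norm_real,
        Real.norm_of_nonneg (by positivity), show 1 / 2 * x = x / 2 by ring]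
      refine one_div_le_one_div_of_le (by positivity) ?_
      calc Real.cosh (x / 2) ≤ 2 * Real.cosh (x / 2) := by linarith
        _ ≤ _ := le_self_pow₀ (by linarith) hn.ne'
  have := integral_re hint
  simp only [RCLike.re_eq_complex_re] at this
  rw [← this]
  refine integral_congr_ae (Filter.Eventually.of_forall fun x => ?_)
  have h0 : Complex.I * t * x = ((t * x : ℝ) : ℂ) * Complex.I := by push_cast; ring
  simp only
  rw [h0, ← Complex.ofReal_pow, Complex.div_ofReal_re, Complex.exp_ofReal_mul_I_re]

lemma integral_cos_div_cosh {c : ℝ} (hc : 0 < c) (hc2 : c ^ 2 = π / 2) (a : ℝ) :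
    ∫ x : ℝ, Real.cos (a * x) / Real.cosh (c * x) = 2 * c / Real.cosh (c * a) := by
  have h := integral_cos_div_cosh_pow hc 1 one_pos a
  set t := a / (2 * c) with ht
  have hpt : π * t = c * a := by
    rw [ht, mul_div_assoc', div_eq_iff (by positivity)]
    linear_combination (-2 * a) * hc2
  clear_value t
  have e : Complex.Gamma ((1 : ℕ) / 2 + Complex.I * t) * Complex.Gamma ((1 : ℕ) / 2 - Complex.I * t)
      / Complex.Gamma (1 : ℕ) = ((π / Real.cosh (c * a) : ℝ) : ℂ) := by
    have h1 : ((1 : ℕ) : ℂ) / 2 - Complex.I * t = 1 - ((1 : ℕ) / 2 + Complex.I * t) := by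
      push_cast; ring
    rw [h1, Complex.Gamma_mul_Gamma_one_sub, ← hpt]
    have h2 : (π : ℂ) * ((1 : ℕ) / 2 + Complex.I * t) = ((π * t : ℝ) : ℂ) * Complex.I + π / 2 := by
      push_cast; ring
    rw [h2, Complex.sin_add_pi_div_two, Complex.cos_mul_I, ← Complex.ofReal_cosh]
    simp
  rw [e, Complex.ofReal_re] at h
  have e2 : ∀ x : ℝ, Real.cos (a * x) / Real.cosh (c * x)
      = 2 * (Real.cos (a * x) / (2 * Real.cosh (c * x)) ^ 1) := by
    intro x; have := Real.cosh_pos (c * x); field_simp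
  simp_rw [e2]
  rw [integral_const_mul, h]
  have := Real.cosh_pos (c * a)
  field_simp
  linarith

lemma integral_cos_div_cosh_sq {c : ℝ} (hc : 0 < c) (hc2 : c ^ 2 = π / 2) {a : ℝ} (ha : a ≠ 0) :
    ∫ x : ℝ, Real.cos (a * x) / Real.cosh (c * x) ^ 2 = 2 * a / Real.sinh (c * a) := by
  have h := integral_cos_div_cosh_pow hc 2 two_pos a
  set t := a / (2 * c) with ht
  have ht0 : t ≠ 0 := by positivity
  have hpt : π * t = c * a := by
    rw [ht, mul_div_assoc', div_eq_iff (by positivity)]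
    linear_combination (-2 * a) * hc2
  clear_value t
  have e : Complex.Gamma ((2 : ℕ) / 2 + Complex.I * t) * Complex.Gamma ((2 : ℕ) / 2 - Complex.I * t)
      / Complex.Gamma (2 : ℕ) = ((π * t / Real.sinh (c * a) : ℝ) : ℂ) := by
    have hI : Complex.I * t ≠ 0 := by simp [ht0]
    have h1 : ((2 : ℕ) : ℂ) / 2 + Complex.I * t = Complex.I * t + 1 := by push_cast; ring
    have h1' : ((2 : ℕ) : ℂ) / 2 - Complex.I * t = 1 - Complex.I * t := by push_cast; ring
    rw [h1, h1', Complex.Gamma_add_one _ hI, mul_assoc, Complex.Gamma_mul_Gamma_one_sub, ← hpt]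
    have h2 : (π : ℂ) * (Complex.I * t) = ((π * t : ℝ) : ℂ) * Complex.I := by
      push_cast; ring
    rw [h2, Complex.sin_mul_I, ← Complex.ofReal_sinh]
    have h3 : Complex.Gamma (2 : ℕ) = 1 := by norm_num
    have h4 : (Real.sinh (π * t) : ℂ) ≠ 0 := by
      exact_mod_cast Real.sinh_ne_zero.2 (by positivity)
    rw [h3, div_one, Complex.ofReal_div, Complex.ofReal_mul π t]
    field_simp
  rw [e, Complex.ofReal_re] at h
  have e2 : ∀ x : ℝ, Real.cos (a * x) / Real.cosh (c * x) ^ 2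
      = 4 * (Real.cos (a * x) / (2 * Real.cosh (c * x)) ^ 2) := by
    intro x; have := Real.cosh_pos (c * x); field_simp; norm_num
  simp_rw [e2]
  rw [integral_const_mul, h, hpt]
  have : Real.sinh (c * a) ≠ 0 := Real.sinh_ne_zero.2 (by positivity)
  field_simp
  norm_num

/-! ### The reduced one-dimensional integral -/

/-- The one-dimensional integral to which the double integral reduces: the cosine transform
of the product of `1 / cosh (c x)` and its translate by `b`. -/
noncomputable def sechCorr (c a b : ℝ) : ℝ :=
  ∫ x : ℝ, 1 / Real.cosh (c * x) * (1 / Real.cosh (c * (x + b)) * Real.cos (a * x))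

lemma abs_bdd (u y : ℝ) : |1 / Real.cosh u * Real.cos y| ≤ 1 := by
  rw [abs_mul, abs_of_pos (by have := Real.cosh_pos u; positivity)]
  exact mul_le_one₀ (inv_cosh_le_one _) (abs_nonneg _) (Real.abs_cos_le_one _)

lemma continuous_sechCorr {c : ℝ} (hc : 0 < c) :
    Continuous fun p : ℝ × ℝ => sechCorr c p.1 p.2 := by
  unfold sechCorr
  refine continuous_of_dominated (bound := fun x => 1 / Real.cosh (c * x)) (fun p => ?_)
    (fun p => Filter.Eventually.of_forall fun x => ?_) (integrable_sech hc)
    (Filter.Eventually.of_forall fun x => ?_)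
  · exact (by fun_prop : Measurable fun x : ℝ => 1 / Real.cosh (c * x) *
      (1 / Real.cosh (c * (x + p.2)) * Real.cos (p.1 * x))).aestronglyMeasurable
  · have := Real.cosh_pos (c * x)
    rw [norm_mul, Real.norm_of_nonneg (by positivity)]
    exact mul_le_of_le_one_right (by positivity) (abs_bdd _ _)
  · have h : ∀ p : ℝ × ℝ, Real.cosh (c * (x + p.2)) ≠ 0 := fun p => (Real.cosh_pos _).ne'
    fun_prop (disch := assumption)

lemma sechCorr_neg (c a b : ℝ) : sechCorr c a (-b) = sechCorr c a b := by
  unfold sechCorr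
  rw [← integral_neg_eq_self]
  refine integral_congr_ae (Filter.Eventually.of_forall fun x => ?_)
  have h1 : c * -x = -(c * x) := by ring
  have h2 : c * (-x + -b) = -(c * (x + b)) := by ring
  have h3 : a * -x = -(a * x) := by ring
  simp only [h1, h2, h3, Real.cosh_neg, Real.cos_neg]

/-- Integration by parts, using that `sinh (c b) / (cosh (c x) cosh (c (x + b)))` is the difference
`tanh (c (x + b)) - tanh (c x)`, whose derivative is a difference of translates of
`c / cosh (c x) ^ 2`. -/
lemma sinh_mul_sechCorr {c : ℝ} (hc : 0 < c) {a : ℝ} (ha : a ≠ 0) (b : ℝ) :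
    Real.sinh (c * b) * sechCorr c a b =
      c * (Real.sin (a * b) / a) * ∫ x : ℝ, Real.cos (a * x) / Real.cosh (c * x) ^ 2 := by
  have hpos : ∀ y : ℝ, 0 < Real.cosh y := Real.cosh_pos
  have hne : ∀ y : ℝ, Real.cosh y ≠ 0 := fun y => (hpos y).ne'
  have hsin : Integrable fun x : ℝ => Real.sin (a * x) / Real.cosh (c * x) ^ 2 := by
    refine (integrable_sech_mul hc (f := fun x => 1 / Real.cosh (c * x) * Real.sin (a * x))
      (by fun_prop) (C := 1) fun x => ?_).congr (Filter.Eventually.of_forall fun x => ?_)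
    · rw [abs_mul, abs_of_pos (by have := hpos (c * x); positivity)]
      exact mul_le_one₀ (inv_cosh_le_one _) (abs_nonneg _) (Real.abs_sin_le_one _)
    · have := hne (c * x); simp only; field_simp
  have hcos : Integrable fun x : ℝ => Real.cos (a * x) / Real.cosh (c * x) ^ 2 := by
    refine (integrable_sech_mul hc (f := fun x => 1 / Real.cosh (c * x) * Real.cos (a * x))
      (by fun_prop) (C := 1) fun x => abs_bdd _ _).congr (Filter.Eventually.of_forall fun x => ?_)
    have := hne (c * x); simp only; field_simp
  have hsin0 : ∫ x : ℝ, Real.sin (a * x) / Real.cosh (c * x) ^ 2 = 0 := by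
    have h := integral_neg_eq_self (fun x : ℝ => Real.sin (a * x) / Real.cosh (c * x) ^ 2) volume
    simp only [mul_neg, Real.sin_neg, Real.cosh_neg, neg_div, integral_neg] at h
    linarith
  -- the shifted sine integral, expressed at the unshifted argument
  have hshift_eq : ∀ x : ℝ, Real.sin (a * x) / Real.cosh (c * (x + b)) ^ 2 =
      (fun y : ℝ => Real.cos (a * b) * (Real.sin (a * y) / Real.cosh (c * y) ^ 2) -
        Real.sin (a * b) * (Real.cos (a * y) / Real.cosh (c * y) ^ 2)) (x + b) := by
    intro x
    have : a * x = a * (x + b) - a * b := by ring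
    simp only
    rw [this, Real.sin_sub]
    ring
  have hcomb := (hsin.const_mul (Real.cos (a * b))).sub (hcos.const_mul (Real.sin (a * b)))
  have hshift_int : Integrable fun x : ℝ => Real.sin (a * x) / Real.cosh (c * (x + b)) ^ 2 := by
    simp_rw [hshift_eq]
    exact hcomb.comp_add_right b
  have hshift : ∫ x : ℝ, Real.sin (a * x) / Real.cosh (c * (x + b)) ^ 2 =
      -(Real.sin (a * b) * ∫ x : ℝ, Real.cos (a * x) / Real.cosh (c * x) ^ 2) := by
    simp_rw [hshift_eq]
    rw [integral_add_right_eq_self (fun y : ℝ =>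
      Real.cos (a * b) * (Real.sin (a * y) / Real.cosh (c * y) ^ 2) -
        Real.sin (a * b) * (Real.cos (a * y) / Real.cosh (c * y) ^ 2)) b,
      integral_sub (hsin.const_mul _) (hcos.const_mul _), integral_const_mul, integral_const_mul,
      hsin0]
    ring
  let u : ℝ → ℝ := fun x =>
    Real.sinh (c * (x + b)) / Real.cosh (c * (x + b)) - Real.sinh (c * x) / Real.cosh (c * x)
  let u' : ℝ → ℝ := fun x => c / Real.cosh (c * (x + b)) ^ 2 - c / Real.cosh (c * x) ^ 2
  let v : ℝ → ℝ := fun x => Real.sin (a * x) / a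
  let v' : ℝ → ℝ := fun x => Real.cos (a * x)
  have hu_eq : ∀ x, u x = Real.sinh (c * b) * (1 / Real.cosh (c * x) * (1 / Real.cosh (c * (x + b)))) := by
    intro x
    have h1 := hne (c * x)
    have h2 := hne (c * (x + b))
    have h3 : c * b = c * (x + b) - c * x := by ring
    simp only [u]
    rw [h3, Real.sinh_sub]
    field_simp
  have htanh : ∀ d x : ℝ, HasDerivAt (fun x => Real.sinh (c * (x + d)) / Real.cosh (c * (x + d)))
      (c / Real.cosh (c * (x + d)) ^ 2) x := by
    intro d x
    have h0 : HasDerivAt (fun x : ℝ => c * (x + d)) c x := by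
      simpa using ((hasDerivAt_id x).add_const d).const_mul c
    refine (h0.sinh.div h0.cosh (hne _)).congr_deriv ?_
    congr 1
    linear_combination c * Real.cosh_sq (c * (x + d))
  have hu : ∀ x, HasDerivAt u (u' x) x := fun x => by
    have h0 := htanh 0 x
    simp only [add_zero] at h0
    exact (htanh b x).sub h0
  have hv : ∀ x, HasDerivAt v (v' x) x := fun x => by
    have h0 : HasDerivAt (fun x : ℝ => a * x) a x := by
      simpa using (hasDerivAt_id x).const_mul a
    exact (h0.sin.div_const a).congr_deriv (mul_div_cancel_right₀ _ ha)
  have huv' : Integrable (u * v') := by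
    refine ((integrable_sech_mul hc
      (f := fun x => 1 / Real.cosh (c * (x + b)) * Real.cos (a * x)) (by fun_prop) (C := 1)
      fun x => abs_bdd _ _).const_mul (Real.sinh (c * b))).congr
      (Filter.Eventually.of_forall fun x => ?_)
    simp only [Pi.mul_apply, hu_eq, v']
    ring
  have huv : Integrable (u * v) := by
    refine ((integrable_sech_mul hc
      (f := fun x => 1 / Real.cosh (c * (x + b)) * Real.sin (a * x)) (by fun_prop) (C := 1)
      fun x => ?_).const_mul (Real.sinh (c * b) / a)).congr
      (Filter.Eventually.of_forall fun x => ?_)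
    · rw [abs_mul, abs_of_pos (by have := hpos (c * (x + b)); positivity)]
      exact mul_le_one₀ (inv_cosh_le_one _) (abs_nonneg _) (Real.abs_sin_le_one _)
    simp only [Pi.mul_apply, hu_eq, v]
    ring
  have hu'v_eq : ∀ x, u' x * v x = c / a * (Real.sin (a * x) / Real.cosh (c * (x + b)) ^ 2 -
      Real.sin (a * x) / Real.cosh (c * x) ^ 2) := by
    intro x
    simp only [u', v]
    ring
  have hu'v : Integrable (u' * v) :=
    ((hshift_int.sub hsin).const_mul (c / a)).congr
      (Filter.Eventually.of_forall fun x => (hu'v_eq x).symm)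
  have parts := integral_mul_deriv_eq_deriv_mul_of_integrable (fun x _ => hu x) (fun x _ => hv x)
    huv' hu'v huv
  simp_rw [hu'v_eq] at parts
  rw [integral_const_mul, integral_sub hshift_int hsin, hshift, hsin0] at parts
  have hL : ∫ x : ℝ, u x * v' x = Real.sinh (c * b) * sechCorr c a b := by
    rw [sechCorr, ← integral_const_mul]
    refine integral_congr_ae (Filter.Eventually.of_forall fun x => ?_)
    simp only [hu_eq, v']
    ring
  rw [← hL, parts]
  ring

/-! ### Reduction of the double integral -/

lemma integral_Ioi_of_even {f : ℝ → ℝ} (hf : ∀ x, f (-x) = f x) :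
    ∫ x in Set.Ioi (0 : ℝ), f x = (∫ x : ℝ, f x) / 2 := by
  have h := integral_comp_abs (f := f)
  have e : ∀ x : ℝ, f |x| = f x := fun x => by
    rcases abs_choice x with h | h <;> rw [h]
    exact hf x
  simp_rw [e] at h
  linarith

lemma inner_integral {c : ℝ} (hc : 0 < c) (hc2 : c ^ 2 = π / 2) (a b x : ℝ) :
    ∫ y in Set.Ioi (0 : ℝ), (Real.cos (x * y) / (Real.cosh (c * x) * Real.cosh (c * y))) *
        Real.cos (a * x) * Real.cos (b * y) =
      c / 2 * (1 / Real.cosh (c * x) * (1 / Real.cosh (c * (x + b)) * Real.cos (a * x)) +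
        1 / Real.cosh (c * x) * (1 / Real.cosh (c * (x + -b)) * Real.cos (a * x))) := by
  rw [integral_Ioi_of_even (fun y => by simp only [mul_neg, Real.cos_neg, Real.cosh_neg])]
  have e : ∀ y : ℝ, (Real.cos (x * y) / (Real.cosh (c * x) * Real.cosh (c * y))) *
        Real.cos (a * x) * Real.cos (b * y) = Real.cos (a * x) / (2 * Real.cosh (c * x)) *
      (Real.cos ((x + b) * y) / Real.cosh (c * y) + Real.cos ((x + -b) * y) / Real.cosh (c * y)) := by
    intro y
    have h1 := (Real.cosh_pos (c * x)).ne'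
    have h2 := (Real.cosh_pos (c * y)).ne'
    have e1 : (x + b) * y = x * y + b * y := by ring
    have e2 : (x + -b) * y = x * y - b * y := by ring
    rw [e1, e2, Real.cos_add, Real.cos_sub]
    field_simp
    ring
  have hint : ∀ s : ℝ, Integrable fun y : ℝ => Real.cos (s * y) / Real.cosh (c * y) := fun s =>
    (integrable_sech_mul hc (f := fun y => Real.cos (s * y)) (by fun_prop) (C := 1)
      fun y => Real.abs_cos_le_one _).congr (Filter.Eventually.of_forall fun y => by simp only; ring)
  simp_rw [e]
  rw [integral_const_mul, integral_add (hint _) (hint _), integral_cos_div_cosh hc hc2,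
    integral_cos_div_cosh hc hc2]
  ring

lemma double_integral {c : ℝ} (hc : 0 < c) (hc2 : c ^ 2 = π / 2) (a b : ℝ) :
    ∫ x in Set.Ioi (0 : ℝ), ∫ y in Set.Ioi (0 : ℝ),
      (Real.cos (x * y) / (Real.cosh (c * x) * Real.cosh (c * y))) *
        Real.cos (a * x) * Real.cos (b * y) = c / 2 * sechCorr c a b := by
  have hint : ∀ d : ℝ, Integrable fun x : ℝ =>
      1 / Real.cosh (c * x) * (1 / Real.cosh (c * (x + d)) * Real.cos (a * x)) := fun d =>
    integrable_sech_mul hc (by fun_prop) (C := 1) fun x => abs_bdd _ _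
  simp_rw [inner_integral hc hc2]
  rw [integral_Ioi_of_even, integral_const_mul, integral_add (hint b) (hint (-b))]
  · have h := sechCorr_neg c a b
    unfold sechCorr at h ⊢
    rw [h]
    ring
  · intro x
    have h2 : c * (-x + -b) = -(c * (x + b)) := by ring
    have h3 : c * (-x + b) = -(c * (x + -b)) := by ring
    rw [h2, h3]
    simp only [mul_neg, Real.cosh_neg, Real.cos_neg]
    ring


/-- The right-hand side `sin (a b) / (sinh (√(π/2) a) sinh (√(π/2) b))` is interpreted via
its (unique) continuous extension `g` across `a = 0` and `b = 0`. -/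
theorem stmt_11 (g : ℝ → ℝ → ℝ) (hg : Continuous fun p : ℝ × ℝ => g p.1 p.2)
    (hg' : ∀ a b : ℝ, a ≠ 0 → b ≠ 0 →
      g a b = Real.sin (a * b) /
        (Real.sinh (Real.sqrt (π / 2) * a) * Real.sinh (Real.sqrt (π / 2) * b)))
    (a b : ℝ) :
    2 / π *
      ∫ x in Set.Ioi (0:ℝ), ∫ y in Set.Ioi (0:ℝ),
        (Real.cos (x * y) / (Real.cosh (Real.sqrt (π / 2) * x) * Real.cosh (Real.sqrt (π / 2) * y))) *
          Real.cos (a * x) * Real.cos (b * y)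
      = g a b := by
  set c := Real.sqrt (π / 2) with hcdef
  have hc : 0 < c := Real.sqrt_pos.2 (by positivity)
  have hc2 : c ^ 2 = π / 2 := Real.sq_sqrt (by positivity)
  rw [double_integral hc hc2]
  have hd : Dense (({0}ᶜ : Set ℝ) ×ˢ ({0}ᶜ : Set ℝ)) :=
    (dense_compl_singleton 0).prod (dense_compl_singleton 0)
  have hcont : Continuous fun p : ℝ × ℝ => 2 / π * (c / 2 * sechCorr c p.1 p.2) :=
    continuous_const.mul (continuous_const.mul (continuous_sechCorr hc))
  refine congrFun (hcont.ext_on hd hg ?_) (a, b)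
  rintro ⟨a, b⟩ ⟨ha, hb⟩
  replace ha : a ≠ 0 := ha
  replace hb : b ≠ 0 := hb
  simp only
  have h := sinh_mul_sechCorr hc ha b
  rw [integral_cos_div_cosh_sq hc hc2 ha] at h
  have hsa : Real.sinh (c * a) ≠ 0 := Real.sinh_ne_zero.2 (by positivity)
  have hsb : Real.sinh (c * b) ≠ 0 := Real.sinh_ne_zero.2 (by positivity)
  have hS : sechCorr c a b = 2 * c * Real.sin (a * b) / (Real.sinh (c * a) * Real.sinh (c * b)) := by
    rw [eq_div_iff (mul_ne_zero hsa hsb)]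
    generalize Real.sin (a * b) = s at h ⊢
    field_simp at h
    linear_combination h
  have hpi : π = 2 * c ^ 2 := by linarith
  rw [hg' a b ha hb, hS]
  have : 2 / π * (c / 2 * (2 * c)) = 1 := by
    rw [hpi]; field_simp
  linear_combination
    (Real.sin (a * b) / (Real.sinh (c * a) * Real.sinh (c * b))) * this
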